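/- The odd operators on W are nilpotent of order two: E23 ∘ E23 = 0 and E32 ∘ E32 = 0 as linear operators on W (the Serre relations E23² = E32² = 0 of U_q[gl(2/1)]). -/

import Mathlib

/-! Each odd operator shifts the sector along `3 → {1, 2} → 0` (`E23`) or `0 → {1, 2} → 3` (`E32`),
so its square can be nonzero only on `v(3, x)`, respectively `v(0, x)`. There the square is the sum
of two paths, through the sectors `1` and `2`. When `x` is in the range of all four sectors,
the two contributions cancel: this is the scalar identity `sqrt_paths_eq`, with
`a = [m13 - x]`, `b = [x - m23 + 1]`, `c = [m13 - m23 + 1]`, `d = [m13 - m23]`, all of which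
are nonnegative (`qn_nonneg`), with `c, d > 0` (`qn_pos`). Otherwise `x` lies just outside the range
of the target sector and of sector `2`, and both contributions vanish. -/

noncomputable section

/-- The `q`-number `[x] = (q^x - q^(-x))/(q - q⁻¹)`. -/
def qn (q : ℝ) (x : ℤ) : ℝ := (q ^ x - q ^ (-x)) / (q - q⁻¹)

/-- The triple `(m12, m22, m32)` attached to the sector `k ∈ {0,1,2,3}`. -/
def trip (m13 m23 m33 : ℤ) : Fin 4 → ℤ × ℤ × ℤ
  | 0 => (m13, m23, m33)
  | 1 => (m13, m23 - 1, m33 + 1)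
  | 2 => (m13 - 1, m23, m33 + 1)
  | 3 => (m13 - 1, m23 - 1, m33 + 2)

def M12 (m13 m23 m33 : ℤ) (k : Fin 4) : ℤ := (trip m13 m23 m33 k).1
def M22 (m13 m23 m33 : ℤ) (k : Fin 4) : ℤ := (trip m13 m23 m33 k).2.1
def M32 (m13 m23 m33 : ℤ) (k : Fin 4) : ℤ := (trip m13 m23 m33 k).2.2

/-- `m11` is in the allowed range `m22 ≤ m11 ≤ m12` of the sector `k`. -/
def InR (m13 m23 m33 : ℤ) (k : Fin 4) (x : ℤ) : Prop :=
  M22 m13 m23 m33 k ≤ x ∧ x ≤ M12 m13 m23 m33 k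

instance (m13 m23 m33 : ℤ) (k : Fin 4) (x : ℤ) : Decidable (InR m13 m23 m33 k x) :=
  instDecidableAnd

/-- The index set of the basis `v(k, m11)` of `W`. -/
abbrev Idx (m13 m23 m33 : ℤ) : Type :=
  {p : Fin 4 × ℤ // InR m13 m23 m33 p.1 p.2}

/-- The module `W = W^q([m13,m23,m33])`, realized as the free complex vector
space on the basis `v(k, m11)`, `k ∈ {0,1,2,3}`, `m22 ≤ m11 ≤ m12`. -/
abbrev Wsp (m13 m23 m33 : ℤ) : Type := Idx m13 m23 m33 →₀ ℂ

/-- The basis vector `v(k, m11)` (zero if `m11` is out of range). -/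
def bv (m13 m23 m33 : ℤ) (k : Fin 4) (x : ℤ) : Wsp m13 m23 m33 :=
  if h : InR m13 m23 m33 k x then Finsupp.single ⟨(k, x), h⟩ 1 else 0

/-- The sector `V_k`, the span of the `v(k, ·)`. -/
def Vk (m13 m23 m33 : ℤ) (k : Fin 4) : Submodule ℂ (Wsp m13 m23 m33) :=
  Submodule.span ℂ (Set.range (bv m13 m23 m33 k))

/-- The Gel'fand--Zetlin realization of the induced `U_q[gl(2/1)]`-module
`W^q([m13,m23,m33])`: seven linear operators acting on the basis `v(k, m11)`
by the stated formulas (terms with `m11` out of range being `0`). -/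
structure GZ (q : ℝ) (m13 m23 m33 : ℤ) where
  E11 : Wsp m13 m23 m33 →ₗ[ℂ] Wsp m13 m23 m33
  E22 : Wsp m13 m23 m33 →ₗ[ℂ] Wsp m13 m23 m33
  E33 : Wsp m13 m23 m33 →ₗ[ℂ] Wsp m13 m23 m33
  E12 : Wsp m13 m23 m33 →ₗ[ℂ] Wsp m13 m23 m33
  E21 : Wsp m13 m23 m33 →ₗ[ℂ] Wsp m13 m23 m33
  E23 : Wsp m13 m23 m33 →ₗ[ℂ] Wsp m13 m23 m33
  E32 : Wsp m13 m23 m33 →ₗ[ℂ] Wsp m13 m23 m33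
  hE11 : ∀ (k : Fin 4) (x : ℤ), InR m13 m23 m33 k x →
    E11 (bv m13 m23 m33 k x) = (x : ℂ) • bv m13 m23 m33 k x
  hE22 : ∀ (k : Fin 4) (x : ℤ), InR m13 m23 m33 k x →
    E22 (bv m13 m23 m33 k x) =
      ((M12 m13 m23 m33 k + M22 m13 m23 m33 k - x : ℤ) : ℂ) • bv m13 m23 m33 k x
  hE33 : ∀ (k : Fin 4) (x : ℤ), InR m13 m23 m33 k x →
    E33 (bv m13 m23 m33 k x) = ((M32 m13 m23 m33 k : ℤ) : ℂ) • bv m13 m23 m33 k x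
  hE12 : ∀ (k : Fin 4) (x : ℤ), InR m13 m23 m33 k x →
    E12 (bv m13 m23 m33 k x) =
      ((Real.sqrt (qn q (M12 m13 m23 m33 k - x) * qn q (x - M22 m13 m23 m33 k + 1)) : ℝ) : ℂ) •
        bv m13 m23 m33 k (x + 1)
  hE21 : ∀ (k : Fin 4) (x : ℤ), InR m13 m23 m33 k x →
    E21 (bv m13 m23 m33 k x) =
      ((Real.sqrt (qn q (M12 m13 m23 m33 k - x + 1) * qn q (x - M22 m13 m23 m33 k)) : ℝ) : ℂ) •
        bv m13 m23 m33 k (x - 1)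
  hE23₀ : ∀ x : ℤ, InR m13 m23 m33 0 x → E23 (bv m13 m23 m33 0 x) = 0
  hE23₁ : ∀ x : ℤ, InR m13 m23 m33 1 x →
    E23 (bv m13 m23 m33 1 x) =
      ((Real.sqrt (qn q (x - m23 + 1) / qn q (m13 - m23 + 1)) * qn q (m23 + m33) : ℝ) : ℂ) •
        bv m13 m23 m33 0 x
  hE23₂ : ∀ x : ℤ, InR m13 m23 m33 2 x →
    E23 (bv m13 m23 m33 2 x) =
      ((Real.sqrt (qn q (m13 - x) / qn q (m13 - m23)) * qn q (m13 + m33 + 1) : ℝ) : ℂ) •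
        bv m13 m23 m33 0 x
  hE23₃ : ∀ x : ℤ, InR m13 m23 m33 3 x →
    E23 (bv m13 m23 m33 3 x) =
      ((q⁻¹ * Real.sqrt (qn q (m13 - x) / qn q (m13 - m23 + 1)) * qn q (m13 + m33 + 1) : ℝ) : ℂ) •
          bv m13 m23 m33 1 x
        - ((q⁻¹ * Real.sqrt (qn q (x - m23 + 1) * qn q (m13 - m23)) *
            (qn q (m23 + m33) / qn q (m13 - m23 + 1)) : ℝ) : ℂ) • bv m13 m23 m33 2 x
  hE32₀ : ∀ x : ℤ, InR m13 m23 m33 0 x →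
    E32 (bv m13 m23 m33 0 x) =
      ((Real.sqrt (qn q (x - m23 + 1) / qn q (m13 - m23 + 1)) : ℝ) : ℂ) • bv m13 m23 m33 1 x
        + ((Real.sqrt (qn q (m13 - x) * qn q (m13 - m23)) / qn q (m13 - m23 + 1) : ℝ) : ℂ) •
            bv m13 m23 m33 2 x
  hE32₁ : ∀ x : ℤ, InR m13 m23 m33 1 x →
    E32 (bv m13 m23 m33 1 x) =
      ((q * Real.sqrt (qn q (m13 - x) / qn q (m13 - m23 + 1)) : ℝ) : ℂ) • bv m13 m23 m33 3 x
  hE32₂ : ∀ x : ℤ, InR m13 m23 m33 2 x →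
    E32 (bv m13 m23 m33 2 x) =
      -(((q * Real.sqrt (qn q (x - m23 + 1) / qn q (m13 - m23)) : ℝ) : ℂ) • bv m13 m23 m33 3 x)
  hE32₃ : ∀ x : ℤ, InR m13 m23 m33 3 x → E32 (bv m13 m23 m33 3 x) = 0

lemma qn_pos {q : ℝ} (hq : 0 < q) (hq1 : q ≠ 1) {x : ℤ} (hx : 0 < x) : 0 < qn q x := by
  unfold qn
  rcases lt_or_gt_of_ne hq1 with h | h
  · apply div_pos_of_neg_of_neg
    · have := zpow_lt_zpow_right_of_lt_one₀ hq h (show -x < x by omega)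
      linarith
    · have := (one_lt_inv₀ hq).2 h
      linarith
  · apply div_pos
    · have := zpow_lt_zpow_right₀ h (show -x < x by omega)
      linarith
    · have := inv_lt_one_of_one_lt₀ h
      linarith

lemma qn_nonneg {q : ℝ} (hq : 0 < q) (hq1 : q ≠ 1) {x : ℤ} (hx : 0 ≤ x) : 0 ≤ qn q x := by
  rcases hx.eq_or_lt with rfl | h
  · simp [qn]
  · exact (qn_pos hq hq1 h).le

/-- Up to common factors, the left side is the coefficient of the path through sector `1` and
the right side that of the path through sector `2`; both equal `√a √b / c`. -/
lemma sqrt_paths_eq {a b c d : ℝ} (ha : 0 ≤ a) (hb : 0 ≤ b) (hc : 0 < c) (hd : 0 < d) :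
    √(a / c) * √(b / c) = √(b * d) / c * √(a / d) := by
  have hd' : √d ≠ 0 := (Real.sqrt_pos.2 hd).ne'
  have hc' : √c ≠ 0 := (Real.sqrt_pos.2 hc).ne'
  rw [Real.sqrt_div ha, Real.sqrt_div hb, Real.sqrt_div ha, Real.sqrt_mul hb]
  have : √c * √c = c := Real.mul_self_sqrt hc.le
  rw [div_mul_div_comm, this]
  field_simp

lemma inR_zero {m13 m23 m33 x : ℤ} : InR m13 m23 m33 0 x ↔ m23 ≤ x ∧ x ≤ m13 := Iff.rfl

lemma inR_one {m13 m23 m33 x : ℤ} : InR m13 m23 m33 1 x ↔ m23 - 1 ≤ x ∧ x ≤ m13 := Iff.rfl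

lemma inR_two {m13 m23 m33 x : ℤ} : InR m13 m23 m33 2 x ↔ m23 ≤ x ∧ x ≤ m13 - 1 := Iff.rfl

lemma inR_three {m13 m23 m33 x : ℤ} : InR m13 m23 m33 3 x ↔ m23 - 1 ≤ x ∧ x ≤ m13 - 1 := Iff.rfl

lemma bv_of_not_inR {m13 m23 m33 : ℤ} {k : Fin 4} {x : ℤ} (h : ¬ InR m13 m23 m33 k x) :
    bv m13 m23 m33 k x = 0 := dif_neg h

/-- A linear map on `W` vanishes once it kills every basis vector `v(k, x)` with `x` in range. -/
lemma linearMap_eq_zero {m13 m23 m33 : ℤ} (f : Wsp m13 m23 m33 →ₗ[ℂ] Wsp m13 m23 m33)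
    (h : ∀ k x, InR m13 m23 m33 k x → f (bv m13 m23 m33 k x) = 0) : f = 0 := by
  apply Finsupp.lhom_ext'
  rintro ⟨⟨k, x⟩, hx⟩
  apply LinearMap.ext_ring
  have := h k x hx
  rw [bv, dif_pos hx] at this
  simpa using this

lemma GZ.E23_bv_zero {q : ℝ} {m13 m23 m33 : ℤ} (R : GZ q m13 m23 m33) (x : ℤ) :
    R.E23 (bv m13 m23 m33 0 x) = 0 := by
  by_cases h : InR m13 m23 m33 0 x
  · exact R.hE23₀ x h
  · rw [bv_of_not_inR h, map_zero]

lemma GZ.E32_bv_three {q : ℝ} {m13 m23 m33 : ℤ} (R : GZ q m13 m23 m33) (x : ℤ) :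
    R.E32 (bv m13 m23 m33 3 x) = 0 := by
  by_cases h : InR m13 m23 m33 3 x
  · exact R.hE32₃ x h
  · rw [bv_of_not_inR h, map_zero]

/-- The two paths `3 → 1 → 0` and `3 → 2 → 0` cancel. -/
lemma GZ.E23_E23_bv_three {q : ℝ} (hq : 0 < q) (hq1 : q ≠ 1) {m13 m23 m33 : ℤ}
    (R : GZ q m13 m23 m33) {x : ℤ} (hx : InR m13 m23 m33 3 x) :
    R.E23 (R.E23 (bv m13 m23 m33 3 x)) = 0 := by
  have hx' := inR_three.1 hx
  have h1 : InR m13 m23 m33 1 x := inR_one.2 (by omega)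
  rw [R.hE23₃ x hx, map_sub, map_smul, map_smul, R.hE23₁ x h1]
  by_cases h2 : InR m13 m23 m33 2 x
  · have h2' := inR_two.1 h2
    have key := sqrt_paths_eq (qn_nonneg hq hq1 (show 0 ≤ m13 - x by omega))
      (qn_nonneg hq hq1 (show 0 ≤ x - m23 + 1 by omega))
      (qn_pos hq hq1 (show 0 < m13 - m23 + 1 by omega))
      (qn_pos hq hq1 (show 0 < m13 - m23 by omega))
    rw [R.hE23₂ x h2, smul_smul, smul_smul, ← sub_smul, ← Complex.ofReal_mul,
      ← Complex.ofReal_mul, ← Complex.ofReal_sub]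
    convert zero_smul ℂ _
    rw [Complex.ofReal_eq_zero]
    linear_combination (q⁻¹ * qn q (m13 + m33 + 1) * qn q (m23 + m33)) * key
  -- Here `x = m23 - 1`, so sector `0` contains no `v(0, x)` either.
  · have h0 : ¬ InR m13 m23 m33 0 x := by
      rw [inR_two] at h2
      rw [inR_zero]
      omega
    simp [bv_of_not_inR h2, bv_of_not_inR h0]

/-- The two paths `0 → 1 → 3` and `0 → 2 → 3` cancel. -/
lemma GZ.E32_E32_bv_zero {q : ℝ} (hq : 0 < q) (hq1 : q ≠ 1) {m13 m23 m33 : ℤ}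
    (R : GZ q m13 m23 m33) {x : ℤ} (hx : InR m13 m23 m33 0 x) :
    R.E32 (R.E32 (bv m13 m23 m33 0 x)) = 0 := by
  have hx' := inR_zero.1 hx
  have h1 : InR m13 m23 m33 1 x := inR_one.2 (by omega)
  rw [R.hE32₀ x hx, map_add, map_smul, map_smul, R.hE32₁ x h1]
  by_cases h2 : InR m13 m23 m33 2 x
  · have h2' := inR_two.1 h2
    -- The roles of `[m13 - x]` and `[x - m23 + 1]` are exchanged relative to `E23`.
    have key := sqrt_paths_eq (qn_nonneg hq hq1 (show 0 ≤ x - m23 + 1 by omega))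
      (qn_nonneg hq hq1 (show 0 ≤ m13 - x by omega))
      (qn_pos hq hq1 (show 0 < m13 - m23 + 1 by omega))
      (qn_pos hq hq1 (show 0 < m13 - m23 by omega))
    rw [R.hE32₂ x h2, smul_neg, ← sub_eq_add_neg, smul_smul, smul_smul, ← sub_smul,
      ← Complex.ofReal_mul, ← Complex.ofReal_mul, ← Complex.ofReal_sub]
    convert zero_smul ℂ _
    rw [Complex.ofReal_eq_zero]
    linear_combination q * key
  -- Here `x = m13`, so sector `3` contains no `v(3, x)` either.
  · have h3 : ¬ InR m13 m23 m33 3 x := by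
      rw [inR_two] at h2
      rw [inR_three]
      omega
    simp [bv_of_not_inR h2, bv_of_not_inR h3]

/-- The odd operators on `W` are nilpotent of order two:
`E23 ∘ E23 = 0` and `E32 ∘ E32 = 0` (the Serre relations `E23² = E32² = 0`
of `U_q[gl(2/1)]`). -/
theorem stmt_7 (q : ℝ) (hq : 0 < q) (hq1 : q ≠ 1)
    (m13 m23 m33 : ℤ) (hm : m23 ≤ m13) (R : GZ q m13 m23 m33) :
    R.E23 ∘ₗ R.E23 = 0 ∧ R.E32 ∘ₗ R.E32 = 0 := by
  constructor
  · apply linearMap_eq_zero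
    intro k x hx
    rw [LinearMap.comp_apply]
    fin_cases k
    · exact (congrArg R.E23 (R.hE23₀ x hx)).trans (map_zero _)
    · exact (congrArg R.E23 (R.hE23₁ x hx)).trans (by rw [map_smul, R.E23_bv_zero, smul_zero])
    · exact (congrArg R.E23 (R.hE23₂ x hx)).trans (by rw [map_smul, R.E23_bv_zero, smul_zero])
    · exact R.E23_E23_bv_three hq hq1 hx
  · apply linearMap_eq_zero
    intro k x hx
    rw [LinearMap.comp_apply]
    fin_cases k
    · exact R.E32_E32_bv_zero hq hq1 hx
    · exact (congrArg R.E32 (R.hE32₁ x hx)).trans (by rw [map_smul, R.E32_bv_three, smul_zero])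
    · exact (congrArg R.E32 (R.hE32₂ x hx)).trans
        (by rw [map_neg, map_smul, R.E32_bv_three, smul_zero, neg_zero])
    · exact (congrArg R.E32 (R.hE32₃ x hx)).trans (map_zero _)
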